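/- Let (X,d,𝔪) be a PI space with 𝔪(X) = ∞, and let E ⊂ X be an indecomposable set. If F ⊂ X is an indecomposable set with 𝔪(E ∖ sat(F)) = 0, then 𝔪(sat(E) ∖ sat(F)) = 0. -/

import Mathlib

open MeasureTheory Metric Filter Set ENNReal NNReal Topology

/-- A curve: a rectifiable continuous map from a compact interval into `X`,
parametrized by arc length (hence `1`-Lipschitz on `[0, len]`). -/
structure Curve (X : Type*) [MetricSpace X] where
  len : ℝ
  len_nonneg : 0 ≤ len
  toFun : ℝ → X
  lipschitzOn : LipschitzOnWith 1 toFun (Set.Icc 0 len)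

namespace Curve

variable {X : Type*} [MetricSpace X]

/-- A curve is nonconstant if it attains two distinct values. -/
def IsNonconstant (γ : Curve X) : Prop :=
  ∃ s ∈ Set.Icc (0:ℝ) γ.len, ∃ t ∈ Set.Icc (0:ℝ) γ.len, γ.toFun s ≠ γ.toFun t

/-- A curve lies in a set `W`. -/
def IsIn (γ : Curve X) (W : Set X) : Prop :=
  ∀ s ∈ Set.Icc (0:ℝ) γ.len, γ.toFun s ∈ W

end Curve

variable {X : Type*} [MetricSpace X] [MeasurableSpace X] [BorelSpace X]

/-- The curve integral `∫_γ g ds` for an arc-length parametrized curve. -/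
noncomputable def curveLintegral (g : X → ℝ≥0∞) (γ : Curve X) : ℝ≥0∞ :=
  ∫⁻ s in Set.Icc (0:ℝ) γ.len, g (γ.toFun s)

/-- The upper gradient inequality `|u(x) - u(y)| ≤ ∫_γ g ds` along a curve `γ`
with endpoints `x, y`. -/
def UpperGradIneq (g : X → ℝ≥0∞) (u : X → ℝ) (γ : Curve X) : Prop :=
  ENNReal.ofReal |u (γ.toFun 0) - u (γ.toFun γ.len)| ≤ curveLintegral g γ

/-- The 1-modulus of a family of curves. -/
noncomputable def mod1 (μ : Measure X) (Γ : Set (Curve X)) : ℝ≥0∞ :=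
  ⨅ (ρ : X → ℝ≥0∞) (_ : Measurable ρ ∧ ∀ γ ∈ Γ, 1 ≤ curveLintegral ρ γ),
    ∫⁻ x, ρ x ∂μ

/-- `g` is a 1-weak upper gradient of `u` in `W`: the upper gradient inequality
holds for all nonconstant curves in `W` outside a family of 1-modulus zero. -/
def IsWeakUpperGradientOn (μ : Measure X) (g : X → ℝ≥0∞) (u : X → ℝ) (W : Set X) : Prop :=
  Measurable g ∧
    mod1 μ {γ : Curve X | γ.IsNonconstant ∧ γ.IsIn W ∧ ¬ UpperGradIneq g u γ} = 0

/-- `g` is a (strong) upper gradient of `u` in `X`. -/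
def IsUpperGradient (g : X → ℝ≥0∞) (u : X → ℝ) : Prop :=
  Measurable g ∧ ∀ γ : Curve X, γ.IsNonconstant → UpperGradIneq g u γ

/-- `∫_W g_u dμ`: the integral over `W` of the minimal 1-weak upper gradient of `u`
in `W`, equivalently the infimum of `∫_W g dμ` over all 1-weak upper gradients `g`
of `u` in `W`. -/
noncomputable def gradEnergy (μ : Measure X) (u : X → ℝ) (W : Set X) : ℝ≥0∞ :=
  ⨅ (g : X → ℝ≥0∞) (_ : IsWeakUpperGradientOn μ g u W), ∫⁻ x in W, g x ∂μ

/-- `u` is locally Lipschitz on `W`. -/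
def LocLipschitzOn (u : X → ℝ) (W : Set X) : Prop :=
  ∀ x ∈ W, ∃ K : ℝ≥0, ∃ t ∈ nhdsWithin x W, LipschitzOnWith K u t

/-- Convergence `uᵢ → v` in `L¹_loc(W)`. -/
def TendstoL1loc (μ : Measure X) (W : Set X) (u : ℕ → X → ℝ) (v : X → ℝ) : Prop :=
  ∀ W' : Set X, IsOpen W' → IsCompact (closure W') → closure W' ⊆ W →
    Tendsto (fun i => ∫⁻ x in W', ENNReal.ofReal |u i x - v x| ∂μ) atTop (𝓝 0)

/-- The total variation `‖Dv‖(W)` of a function `v` in an open set `W`. -/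
noncomputable def variationOn (μ : Measure X) (v : X → ℝ) (W : Set X) : ℝ≥0∞ :=
  ⨅ (u : ℕ → X → ℝ) (_ : (∀ i, LocLipschitzOn (u i) W) ∧ TendstoL1loc μ W u v),
    Filter.liminf (fun i => gradEnergy μ (u i) W) Filter.atTop

/-- The total variation `‖Dv‖(A)` of a function `v` in an arbitrary set `A`. -/
noncomputable def totalVar (μ : Measure X) (v : X → ℝ) (A : Set X) : ℝ≥0∞ :=
  ⨅ (W : Set X) (_ : IsOpen W ∧ A ⊆ W), variationOn μ v W

/-- The perimeter `P(E, A) = ‖Dχ_E‖(A)`. -/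
noncomputable def perimeter (μ : Measure X) (E A : Set X) : ℝ≥0∞ :=
  totalVar μ (Set.indicator E fun _ => (1 : ℝ)) A

/-- The measure `μ` is doubling. -/
def IsDoublingMeasure (μ : Measure X) : Prop :=
  ∃ C : ℝ≥0∞, 1 ≤ C ∧ ∀ (x : X) (r : ℝ), 0 < r → μ (ball x (2 * r)) ≤ C * μ (ball x r)

/-- The space supports a (1,1)-Poincaré inequality:
`⨍_{B(x,r)} |u - u_{B(x,r)}| dμ ≤ C r ⨍_{B(x,λr)} g dμ` for every ball, every
`u ∈ L¹_loc(X)` and every upper gradient `g` of `u` (stated here multiplied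
through by the measures of the two balls). -/
def SupportsPoincare (μ : Measure X) : Prop :=
  ∃ C lam : ℝ, 0 < C ∧ 1 ≤ lam ∧
    ∀ (x : X) (r : ℝ), 0 < r → ∀ (u : X → ℝ) (g : X → ℝ≥0∞),
      (∀ (y : X) (s : ℝ), IntegrableOn u (ball y s) μ) → IsUpperGradient g u →
        μ (ball x (lam * r)) *
            ∫⁻ y in ball x r, ENNReal.ofReal |u y - ⨍ z in ball x r, u z ∂μ| ∂μ ≤
          ENNReal.ofReal (C * r) * μ (ball x r) * ∫⁻ y in ball x (lam * r), g y ∂μ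

/-- `(X, d, μ)` is a PI space: complete, doubling, supporting a (1,1)-Poincaré
inequality. -/
def IsPISpace (μ : Measure X) : Prop :=
  CompleteSpace X ∧ IsDoublingMeasure μ ∧ SupportsPoincare μ

/-- A set `E` of finite perimeter is decomposable in a Borel set `D` if there is a
partition `{F, G}` of `E ∩ D` into sets of finite perimeter in `D`, both of positive
measure, with `P(E,D) = P(F,D) + P(G,D)`. -/
def IsDecomposableIn (μ : Measure X) (E D : Set X) : Prop :=
  ∃ F G : Set X, MeasurableSet F ∧ MeasurableSet G ∧ Disjoint F G ∧ F ∪ G = E ∩ D ∧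
    perimeter μ F D < ⊤ ∧ perimeter μ G D < ⊤ ∧ 0 < μ F ∧ 0 < μ G ∧
    perimeter μ E D = perimeter μ F D + perimeter μ G D

/-- `E` is indecomposable in `D`. -/
def IsIndecomposableIn (μ : Measure X) (E D : Set X) : Prop :=
  ¬ IsDecomposableIn μ E D

/-- `{F i}_{i ∈ I}` is a (finite or countable) partition of `E` into indecomposable
Borel sets of positive measure and finite perimeter whose perimeters sum to `P(E,X)`;
this is the defining property of the essential connected components `𝒞𝒞ᵉ(E)`. -/
def IsEssentialPartition (μ : Measure X) (E : Set X) (I : Set ℕ) (F : ℕ → Set X) : Prop :=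
  (∀ i ∈ I, MeasurableSet (F i)) ∧
  (∀ i ∈ I, ∀ j ∈ I, i ≠ j → Disjoint (F i) (F j)) ∧
  (⋃ i ∈ I, F i) = E ∧
  (∀ i ∈ I, 0 < μ (F i)) ∧
  (∀ i ∈ I, perimeter μ (F i) Set.univ < ⊤) ∧
  (∀ i ∈ I, IsIndecomposableIn μ (F i) Set.univ) ∧
  perimeter μ E Set.univ = ∑' i : I, perimeter μ (F i.1) Set.univ

/-- Given a decomposition `{G i}_{i ∈ I}` of `X ∖ E` into essential connected
components, the saturation of `E`: the union of `E` and its holes, i.e. the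
components of finite measure. -/
def saturationOf (μ : Measure X) (E : Set X) (I : Set ℕ) (G : ℕ → Set X) : Set X :=
  E ∪ ⋃ (i : ℕ) (_ : i ∈ I ∧ μ (G i) < ⊤), G i

/-- The measure-theoretic boundary `∂* E`: points where both `E` and its complement
have strictly positive upper density. -/
def mtBoundary (μ : Measure X) (E : Set X) : Set X :=
  {x : X |
    0 < Filter.limsup (fun r => μ (ball x r ∩ E) / μ (ball x r)) (nhdsWithin 0 (Set.Ioi 0)) ∧
    0 < Filter.limsup (fun r => μ (ball x r \ E) / μ (ball x r)) (nhdsWithin 0 (Set.Ioi 0))}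

/-- The restricted codimension-one Hausdorff content `ℋ_R`. -/
noncomputable def codimOneContent (μ : Measure X) (R : ℝ) (A : Set X) : ℝ≥0∞ :=
  ⨅ (s : Set (X × ℝ))
    (_ : s.Countable ∧ (∀ p ∈ s, 0 < p.2 ∧ p.2 ≤ R) ∧ A ⊆ ⋃ p ∈ s, ball p.1 p.2),
    ∑' p : s, μ (ball (p : X × ℝ).1 (p : X × ℝ).2) / ENNReal.ofReal (p : X × ℝ).2

/-- The codimension-one Hausdorff measure `ℋ(A) = lim_{R → 0} ℋ_R(A)`. -/
noncomputable def codimOneHausdorff (μ : Measure X) (A : Set X) : ℝ≥0∞ :=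
  ⨆ (R : ℝ) (_ : 0 < R), codimOneContent μ R A

/-!
Along a curve the slope of a minimum or a maximum is that of one of the two functions. This locality
of weak upper gradients makes the total variation, hence the perimeter, submodular:
`P(E ∩ F) + P(E ∪ F) ≤ P(E) + P(F)`. Together with lower semicontinuity, submodularity shows that
each essential connected component of `E` either contains a.e. a given indecomposable set lying a.e.
in `E`, or is a.e. disjoint from it.

The complement of `sat(F)` is the union of the components `H` of `X ∖ F` of infinite measure. As `E`
lies a.e. in `sat(F)`, each such `H` lies a.e. in `X ∖ E`. A hole of `E` has finite measure, so it
cannot contain `H` a.e., and is therefore a.e. disjoint from it.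
-/

/-! ### Real functions of one variable -/

section RealLine

theorem norm_le_norm_of_hasDerivAt_of_norm_sub_le {𝕜 E F : Type*} [NontriviallyNormedField 𝕜]
    [NormedAddCommGroup E] [NormedSpace 𝕜 E] [NormedAddCommGroup F] [NormedSpace 𝕜 F]
    {f : 𝕜 → E} {g : 𝕜 → F} {f' : E} {g' : F} {x : 𝕜} (hf : HasDerivAt f f' x)
    (hg : HasDerivAt g g' x) (hle : ∀ᶠ y in 𝓝 x, ‖f y - f x‖ ≤ ‖g y - g x‖) : ‖f'‖ ≤ ‖g'‖ := by
  refine le_of_tendsto_of_tendsto hf.tendsto_slope.norm hg.tendsto_slope.norm ?_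
  filter_upwards [hle.filter_mono nhdsWithin_le_nhds] with y hy
  simp only [slope_def_module, norm_smul]
  gcongr

theorem ae_deriv_eq_of_eq {E : Type*} [NormedAddCommGroup E] [NormedSpace ℝ E] (f g : ℝ → E) :
    ∀ᵐ x, f x = g x → DifferentiableAt ℝ f x → DifferentiableAt ℝ g x → deriv f x = deriv g x := by
  have hisolated : ∀ᵐ x, x ∉ {x ∈ {x | f x = g x} | 𝓝[{x | f x = g x} ∩ Ioi x] x = ⊥} :=
    countable_setOfPred_isolated_right_within.ae_notMem volume
  filter_upwards [hisolated] with x hx hfg hf hg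
  by_contra hne
  have hsub := (hf.hasDerivAt.sub hg.hasDerivAt).eventually_ne (c := 0) (sub_ne_zero.mpr hne)
  refine hx ⟨hfg, empty_mem_iff_bot.mp ?_⟩
  filter_upwards [self_mem_nhdsWithin,
    hsub.filter_mono (nhdsWithin_mono x fun y hy => (ne_of_gt hy.2 : y ≠ x))] with y hy hyne
  exact hyne (sub_eq_zero.mpr hy.1)

theorem absolutelyContinuousOnInterval_of_dist_le {Y Z : Type*} [PseudoMetricSpace Y]
    [PseudoMetricSpace Z] {f : ℝ → Y} {g : ℝ → Z} {a b : ℝ}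
    (hg : AbsolutelyContinuousOnInterval g a b)
    (hle : ∀ x ∈ uIcc a b, ∀ y ∈ uIcc a b, dist (f x) (f y) ≤ dist (g x) (g y)) :
    AbsolutelyContinuousOnInterval f a b := by
  refine squeeze_zero' (.of_forall fun _ => Finset.sum_nonneg fun _ _ => dist_nonneg) ?_ hg
  filter_upwards [mem_inf_of_right (mem_principal_self _)] with I hI
  exact Finset.sum_le_sum fun i hi => hle _ (hI.1 i hi).1 _ (hI.1 i hi).2

variable {a b : ℝ} {f : ℝ → ℝ}

theorem abs_sub_le_abs_integral_toReal {g : ℝ → ℝ≥0∞}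
    (hg : AEMeasurable g (volume.restrict (Icc a b))) (hfin : ∫⁻ r in Icc a b, g r ≠ ⊤)
    (hfg : ∀ s t, a ≤ s → s ≤ t → t ≤ b → ENNReal.ofReal |f s - f t| ≤ ∫⁻ r in Icc s t, g r)
    {s t : ℝ} (hs : s ∈ Icc a b) (ht : t ∈ Icc a b) :
    |f t - f s| ≤ |∫ r in s..t, (g r).toReal| := by
  wlog hst : s ≤ t generalizing s t
  · rw [abs_sub_comm, intervalIntegral.integral_symm, abs_neg]
    exact this ht hs (le_of_not_ge hst)
  have hsub : Icc s t ⊆ Icc a b := Icc_subset_Icc hs.1 ht.2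
  have hfin' : ∫⁻ r in Icc s t, g r ≠ ⊤ := ne_top_of_le_ne_top hfin (lintegral_mono_set hsub)
  have hg' := hg.mono_set hsub
  rw [abs_sub_comm, intervalIntegral.integral_of_le hst, ← integral_Icc_eq_integral_Ioc,
    integral_toReal hg' (ae_lt_top' hg' hfin')]
  exact ((ENNReal.ofReal_le_iff_le_toReal hfin').mp (hfg s t hs.1 hst ht.2)).trans (le_abs_self _)

theorem ae_differentiableAt_and_ofReal_abs_deriv_le {g : ℝ → ℝ≥0∞}
    (hg : AEMeasurable g (volume.restrict (Icc a b))) (hfin : ∫⁻ r in Icc a b, g r ≠ ⊤)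
    (hfg : ∀ s t, a ≤ s → s ≤ t → t ≤ b → ENNReal.ofReal |f s - f t| ≤ ∫⁻ r in Icc s t, g r) :
    ∀ᵐ x ∂volume.restrict (Icc a b),
      DifferentiableAt ℝ f x ∧ ENNReal.ofReal |deriv f x| ≤ g x := by
  rcases lt_or_ge b a with hab | hab
  · simp [Icc_eq_empty hab.not_ge]
  have hint : IntervalIntegrable (fun r => (g r).toReal) volume a b :=
    (intervalIntegrable_iff_integrableOn_Icc_of_le hab).mpr
      (integrable_toReal_of_lintegral_ne_top hg hfin)
  have hdom := @abs_sub_le_abs_integral_toReal a b f g hg hfin hfg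
  have hac : AbsolutelyContinuousOnInterval f a b := by
    refine absolutelyContinuousOnInterval_of_dist_le
      (hint.absolutelyContinuousOnInterval_intervalIntegral left_mem_uIcc) fun x hx y hy => ?_
    have hsub : ∀ z ∈ uIcc a b, IntervalIntegrable (fun r => (g r).toReal) volume a z :=
      fun z hz => hint.mono_set (uIcc_subset_uIcc_left hz)
    rw [Real.dist_eq, Real.dist_eq,
      intervalIntegral.integral_interval_sub_left (hsub x hx) (hsub y hy)]
    rw [uIcc_of_le hab] at hx hy
    exact hdom hy hx
  filter_upwards [ae_lt_top' hg hfin, ae_restrict_of_ae hac.ae_differentiableAt,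
    ae_restrict_of_ae hint.ae_hasDerivAt_integral,
    (Ioo_ae_eq_Icc (μ := volume) (a := a) (b := b)).mem_iff.filter_mono ae_restrict_le,
    ae_restrict_mem measurableSet_Icc] with x hlt hdiff hderiv hIoo hx
  have hxu : x ∈ uIcc a b := by rwa [uIcc_of_le hab]
  refine ⟨hdiff hxu, (ENNReal.ofReal_le_iff_le_toReal hlt.ne).mpr ?_⟩
  rw [← abs_of_nonneg (ENNReal.toReal_nonneg (a := g x))]
  refine norm_le_norm_of_hasDerivAt_of_norm_sub_le (hdiff hxu).hasDerivAt (hderiv hxu x hxu) ?_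
  filter_upwards [Icc_mem_nhds_iff.mpr (hIoo.mpr hx)] with y hy
  simpa only [intervalIntegral.integral_same, sub_zero, Real.norm_eq_abs] using hdom hx hy

theorem ofReal_abs_sub_le_lintegral_deriv (hf : AbsolutelyContinuousOnInterval f a b)
    (hab : a ≤ b) :
    ENNReal.ofReal |f a - f b| ≤ ∫⁻ x in Icc a b, ENNReal.ofReal |deriv f x| := by
  rw [abs_sub_comm, ← hf.integral_deriv_eq_sub, intervalIntegral.integral_of_le hab,
    ← integral_Icc_eq_integral_Ioc]
  simp_rw [← Real.enorm_eq_ofReal_abs]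
  exact enorm_integral_le_lintegral_enorm _

end RealLine

/-! ### Modulus of curve families -/

/-- The restriction of a curve to a subinterval `[a, b]` of its parameter interval, reparametrized
by `[0, b - a]`. Weak upper gradient inequalities hold on almost every curve together with all of
its subcurves. -/
def Curve.subcurve {X : Type*} [MetricSpace X] (γ : Curve X) (a b : ℝ) (ha : 0 ≤ a) (hab : a ≤ b)
    (hb : b ≤ γ.len) : Curve X where
  len := b - a
  len_nonneg := sub_nonneg.mpr hab
  toFun s := γ.toFun (a + s)
  lipschitzOn := by
    have hmaps : MapsTo (a + ·) (Icc 0 (b - a)) (Icc 0 γ.len) :=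
      fun s hs => ⟨add_nonneg ha hs.1, (le_sub_iff_add_le'.mp hs.2).trans hb⟩
    exact (γ.lipschitzOn.comp (isometry_add_left a).lipschitz.lipschitzOnWith hmaps).weaken
      (one_mul 1).le

section Modulus

omit [BorelSpace X]

omit [MeasurableSpace X] in
theorem curveLintegral_subcurve (g : X → ℝ≥0∞) (γ : Curve X) {a b : ℝ} (ha : 0 ≤ a)
    (hab : a ≤ b) (hb : b ≤ γ.len) :
    curveLintegral g (γ.subcurve a b ha hab hb) = ∫⁻ s in Icc a b, g (γ.toFun s) := by
  rw [← (measurePreserving_add_left volume a).setLIntegral_comp_preimage_emb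
    (measurableEmbedding_addLeft a) (fun s => g (γ.toFun s)) (Icc a b)]
  simp [curveLintegral, Curve.subcurve]

omit [MeasurableSpace X] in
theorem curveLintegral_indicator (g : X → ℝ≥0∞) {γ : Curve X} {W : Set X} (hγ : γ.IsIn W) :
    curveLintegral (W.indicator g) γ = curveLintegral g γ :=
  setLIntegral_congr_fun measurableSet_Icc fun s hs => indicator_of_mem (hγ s hs) g

theorem Curve.aemeasurable_comp [BorelSpace X] (γ : Curve X) {g : X → ℝ≥0∞} (hg : Measurable g) :
    AEMeasurable (fun s => g (γ.toFun s)) (volume.restrict (Icc 0 γ.len)) :=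
  hg.comp_aemeasurable (γ.lipschitzOn.continuousOn.aemeasurable measurableSet_Icc)

theorem mod1_mono (μ : Measure X) {Γ Δ : Set (Curve X)} (h : Γ ⊆ Δ) : mod1 μ Γ ≤ mod1 μ Δ :=
  le_iInf₂ fun ρ hρ => iInf₂_le ρ ⟨hρ.1, fun γ hγ => hρ.2 γ (h hγ)⟩

theorem mod1_union_le (μ : Measure X) (Γ Δ : Set (Curve X)) :
    mod1 μ (Γ ∪ Δ) ≤ mod1 μ Γ + mod1 μ Δ := by
  refine ENNReal.le_iInf₂_add_iInf₂ fun ρ hρ σ hσ => ?_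
  rw [← lintegral_add_left hρ.1]
  refine iInf₂_le (fun x => ρ x + σ x) ⟨hρ.1.add hσ.1, ?_⟩
  rintro γ (hγ | hγ)
  · exact (hρ.2 γ hγ).trans (lintegral_mono fun s => le_self_add)
  · exact (hσ.2 γ hγ).trans (lintegral_mono fun s => le_add_self)

theorem mod1_eq_zero_of_subset_union {μ : Measure X} {Γ Δ Θ : Set (Curve X)} (h : Θ ⊆ Γ ∪ Δ)
    (hΓ : mod1 μ Γ = 0) (hΔ : mod1 μ Δ = 0) : mod1 μ Θ = 0 :=
  le_zero_iff.mp <| (mod1_mono μ h).trans <| (mod1_union_le μ Γ Δ).trans_eq <| by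
    rw [hΓ, hΔ, add_zero]

theorem mod1_setOf_subcurve_mem_le (μ : Measure X) (Γ : Set (Curve X)) :
    mod1 μ {γ | ∃ a b ha hab hb, γ.subcurve a b ha hab hb ∈ Γ} ≤ mod1 μ Γ := by
  refine le_iInf₂ fun ρ hρ => iInf₂_le ρ ⟨hρ.1, ?_⟩
  rintro γ ⟨a, b, ha, hab, hb, hγ⟩
  calc 1 ≤ curveLintegral ρ (γ.subcurve a b ha hab hb) := hρ.2 _ hγ
    _ = ∫⁻ s in Icc a b, ρ (γ.toFun s) := curveLintegral_subcurve ρ γ ha hab hb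
    _ ≤ curveLintegral ρ γ := lintegral_mono_set (Icc_subset_Icc ha hb)

theorem mod1_setOf_le_curveLintegral_le (μ : Measure X) {g : X → ℝ≥0∞} (hg : Measurable g)
    {c : ℝ≥0∞} (hc₀ : c ≠ 0) (hc : c ≠ ⊤) :
    mod1 μ {γ | c ≤ curveLintegral g γ} ≤ (∫⁻ x, g x ∂μ) / c := by
  rw [ENNReal.div_eq_inv_mul, ← lintegral_const_mul _ hg]
  refine iInf₂_le (fun x => c⁻¹ * g x) ⟨hg.const_mul _, fun γ hγ => ?_⟩
  rw [curveLintegral, lintegral_const_mul' _ _ (ENNReal.inv_ne_top.mpr hc₀),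
    ← ENNReal.inv_mul_cancel hc₀ hc]
  exact mul_le_mul_right hγ _

theorem mod1_setOf_curveLintegral_eq_top {μ : Measure X} {g : X → ℝ≥0∞} {W : Set X}
    (hg : Measurable g) (hW : MeasurableSet W) (hfin : ∫⁻ x in W, g x ∂μ ≠ ⊤) :
    mod1 μ {γ | γ.IsIn W ∧ curveLintegral g γ = ⊤} = 0 := by
  have hlim : Tendsto (fun n : ℕ => (∫⁻ x in W, g x ∂μ) / n) atTop (𝓝 0) := by
    simpa only [ENNReal.div_top] using
      ENNReal.Tendsto.const_div ENNReal.tendsto_nat_nhds_top (.inr hfin)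
  refine le_zero_iff.mp (ge_of_tendsto hlim ?_)
  filter_upwards [eventually_ne_atTop 0] with n hn
  rw [← lintegral_indicator hW]
  refine (mod1_mono μ fun γ hγ => ?_).trans (mod1_setOf_le_curveLintegral_le μ (hg.indicator hW)
    (Nat.cast_ne_zero.mpr hn) (ENNReal.natCast_ne_top n))
  rw [mem_ofPred_eq, curveLintegral_indicator g hγ.1, hγ.2]
  exact le_top

end Modulus

/-! ### Weak upper gradients -/

/-- `g` is an upper gradient of `u` along the curve `γ`: `g` is integrable along `γ` and the upper
gradient inequality holds on every subcurve of `γ`. Weak upper gradients of finite energy have this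
property along almost every curve, which reduces statements on them to one real variable. -/
def IsUpperGradientAlong {X : Type*} [MetricSpace X] (g : X → ℝ≥0∞) (u : X → ℝ)
    (γ : Curve X) : Prop :=
  curveLintegral g γ ≠ ⊤ ∧ ∀ s t, 0 ≤ s → s ≤ t → t ≤ γ.len →
    ENNReal.ofReal |u (γ.toFun s) - u (γ.toFun t)| ≤ ∫⁻ r in Icc s t, g (γ.toFun r)

section LocLipschitzOn

omit [MeasurableSpace X] [BorelSpace X]

variable {u v : X → ℝ} {V W : Set X}

theorem LocLipschitzOn.mono (hu : LocLipschitzOn u W) (hVW : V ⊆ W) : LocLipschitzOn u V :=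
  LocallyLipschitzOn.mono hu hVW

theorem LocLipschitzOn.continuousOn (hu : LocLipschitzOn u W) : ContinuousOn u W :=
  LocallyLipschitzOn.continuousOn hu

theorem LocLipschitzOn.comp_prodMk {f : ℝ × ℝ → ℝ} {K : ℝ≥0} (hf : LipschitzWith K f)
    (hu : LocLipschitzOn u W) (hv : LocLipschitzOn v W) :
    LocLipschitzOn (fun x => f (u x, v x)) W := by
  intro x hx
  obtain ⟨K₁, s, hs, hus⟩ := hu x hx
  obtain ⟨K₂, t, ht, hvt⟩ := hv x hx
  exact ⟨_, s ∩ t, inter_mem hs ht, hf.comp_lipschitzOnWith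
    ((hus.mono inter_subset_left).prodMk (hvt.mono inter_subset_right))⟩

theorem LocLipschitzOn.inf (hu : LocLipschitzOn u W) (hv : LocLipschitzOn v W) :
    LocLipschitzOn (u ⊓ v) W :=
  .comp_prodMk lipschitzWith_min hu hv

theorem LocLipschitzOn.sup (hu : LocLipschitzOn u W) (hv : LocLipschitzOn v W) :
    LocLipschitzOn (u ⊔ v) W :=
  .comp_prodMk lipschitzWith_max hu hv

theorem LocLipschitzOn.absolutelyContinuousOnInterval_comp (hu : LocLipschitzOn u W) {γ : Curve X}
    (hγ : γ.IsIn W) : AbsolutelyContinuousOnInterval (u ∘ γ.toFun) 0 γ.len := by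
  obtain ⟨K, hK⟩ := (LocallyLipschitzOn.mono hu (image_subset_iff.mpr hγ)
    ).exists_lipschitzOnWith_of_compact
      (isCompact_Icc.image_of_continuousOn γ.lipschitzOn.continuousOn)
  have hcomp := hK.comp γ.lipschitzOn (mapsTo_image _ _)
  rw [← uIcc_of_le γ.len_nonneg] at hcomp
  exact hcomp.absolutelyContinuousOnInterval

end LocLipschitzOn

section WeakUpperGradient

variable {μ : Measure X} {g h : X → ℝ≥0∞} {u v w : X → ℝ} {V W S : Set X} {γ : Curve X}

omit [BorelSpace X] in
theorem IsWeakUpperGradientOn.mono (hg : IsWeakUpperGradientOn μ g u W) (hVW : V ⊆ W) :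
    IsWeakUpperGradientOn μ g u V := by
  refine ⟨hg.1, le_zero_iff.mp ((mod1_mono μ ?_).trans_eq hg.2)⟩
  exact fun γ hγ => ⟨hγ.1, fun s hs => hVW (hγ.2.1 s hs), hγ.2.2⟩

omit [BorelSpace X] in
theorem IsWeakUpperGradientOn.mod1_not_isUpperGradientAlong (hg : IsWeakUpperGradientOn μ g u W)
    (hW : MeasurableSet W) (hfin : ∫⁻ x in W, g x ∂μ ≠ ⊤) :
    mod1 μ {γ | γ.IsIn W ∧ ¬ IsUpperGradientAlong g u γ} = 0 := by
  refine mod1_eq_zero_of_subset_union (fun γ ⟨hγW, hγ⟩ => ?_)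
    (mod1_setOf_curveLintegral_eq_top hg.1 hW hfin)
    (le_zero_iff.mp ((mod1_setOf_subcurve_mem_le μ _).trans_eq hg.2))
  by_contra! hcon
  simp only [mem_union, not_or] at hcon
  refine hγ ⟨fun htop => hcon.1 ⟨hγW, htop⟩, fun s t hs hst ht => ?_⟩
  by_contra hbad
  refine hcon.2 ⟨s, t, hs, hst, ht, ?_, fun r hr => hγW _ ?_, fun hineq => hbad ?_⟩
  · refine ⟨0, ⟨le_rfl, sub_nonneg.mpr hst⟩, t - s, ⟨sub_nonneg.mpr hst, le_rfl⟩, fun heq => ?_⟩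
    simp only [Curve.subcurve, add_zero, add_sub_cancel] at heq
    simp [heq] at hbad
  · exact ⟨add_nonneg hs hr.1, (le_sub_iff_add_le'.mp hr.2).trans ht⟩
  · rw [UpperGradIneq, curveLintegral_subcurve] at hineq
    simpa [Curve.subcurve] using hineq

theorem IsUpperGradientAlong.ae_differentiableAt (hγ : IsUpperGradientAlong g u γ)
    (hg : Measurable g) :
    ∀ᵐ s ∂volume.restrict (Icc 0 γ.len), DifferentiableAt ℝ (u ∘ γ.toFun) s ∧
      ENNReal.ofReal |deriv (u ∘ γ.toFun) s| ≤ g (γ.toFun s) :=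
  ae_differentiableAt_and_ofReal_abs_deriv_le (γ.aemeasurable_comp hg) hγ.1 hγ.2

theorem upperGradIneq_piecewise [∀ x, Decidable (x ∈ S)] (hg : Measurable g) (hh : Measurable h)
    (hγg : IsUpperGradientAlong g u γ) (hγh : IsUpperGradientAlong h v γ)
    (hw : LocLipschitzOn w W) (hwu : EqOn w u (W ∩ S)) (hwv : EqOn w v (W \ S))
    (hγ : γ.IsIn W) : UpperGradIneq (S.piecewise g h) w γ := by
  have hac := hw.absolutelyContinuousOnInterval_comp hγ
  refine (ofReal_abs_sub_le_lintegral_deriv hac γ.len_nonneg).trans (lintegral_mono_ae ?_)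
  filter_upwards [hγg.ae_differentiableAt hg, hγh.ae_differentiableAt hh,
    ae_restrict_of_ae hac.ae_differentiableAt, ae_restrict_mem measurableSet_Icc,
    ae_restrict_of_ae (ae_deriv_eq_of_eq (w ∘ γ.toFun) (u ∘ γ.toFun)),
    ae_restrict_of_ae (ae_deriv_eq_of_eq (w ∘ γ.toFun) (v ∘ γ.toFun))]
    with s hus hvs hws hs hwus hwvs
  have hws' := hws (Icc_subset_uIcc hs)
  by_cases hsS : γ.toFun s ∈ S
  · rw [piecewise_eq_of_mem _ _ _ hsS, hwus (hwu ⟨hγ s hs, hsS⟩) hws' hus.1]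
    exact hus.2
  · rw [piecewise_eq_of_notMem _ _ _ hsS, hwvs (hwv ⟨hγ s hs, hsS⟩) hws' hvs.1]
    exact hvs.2

theorem IsWeakUpperGradientOn.piecewise [∀ x, Decidable (x ∈ S)]
    (hg : IsWeakUpperGradientOn μ g u W) (hh : IsWeakUpperGradientOn μ h v W)
    (hgfin : ∫⁻ x in W, g x ∂μ ≠ ⊤) (hhfin : ∫⁻ x in W, h x ∂μ ≠ ⊤) (hW : MeasurableSet W)
    (hS : MeasurableSet S) (hw : LocLipschitzOn w W) (hwu : EqOn w u (W ∩ S))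
    (hwv : EqOn w v (W \ S)) : IsWeakUpperGradientOn μ (S.piecewise g h) w W := by
  refine ⟨hg.1.piecewise hS hh.1, mod1_eq_zero_of_subset_union (fun γ hγ => ?_)
    (hg.mod1_not_isUpperGradientAlong hW hgfin) (hh.mod1_not_isUpperGradientAlong hW hhfin)⟩
  by_contra! hcon
  simp only [mem_union, mem_ofPred_eq, not_or, not_and, not_not] at hcon
  exact hγ.2.2 (upperGradIneq_piecewise hg.1 hh.1 (hcon.1 hγ.2.1) (hcon.2 hγ.2.1) hw hwu hwv
    hγ.2.1)

omit [BorelSpace X] in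
theorem gradEnergy_mono (μ : Measure X) (u : X → ℝ) (hVW : V ⊆ W) :
    gradEnergy μ u V ≤ gradEnergy μ u W :=
  le_iInf₂ fun g hg => (iInf₂_le g (hg.mono hVW)).trans (lintegral_mono_set hVW)

theorem gradEnergy_inf_add_gradEnergy_sup_le (μ : Measure X) (hW : MeasurableSet W)
    (hu : LocLipschitzOn u W) (hv : LocLipschitzOn v W) :
    gradEnergy μ (u ⊓ v) W + gradEnergy μ (u ⊔ v) W ≤ gradEnergy μ u W + gradEnergy μ v W := by
  classical
  refine ENNReal.le_iInf₂_add_iInf₂ fun g hg h hh => ?_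
  by_cases hgfin : ∫⁻ x in W, g x ∂μ = ⊤
  · simp [hgfin]
  by_cases hhfin : ∫⁻ x in W, h x ∂μ = ⊤
  · simp [hhfin]
  obtain ⟨S, hS, hWS⟩ : ∃ S, MeasurableSet S ∧ ∀ x ∈ W, x ∈ S ↔ u x ≤ v x :=
    ⟨Subtype.val '' {x : W | u x ≤ v x}, hW.subtype_image <| measurableSet_le
      hu.continuousOn.domRestrict.measurable hv.continuousOn.domRestrict.measurable,
      fun x hx => by simp [hx]⟩
  have hle : ∀ x ∈ W ∩ S, u x ≤ v x := fun x hx => (hWS x hx.1).mp hx.2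
  have hge : ∀ x ∈ W \ S, v x ≤ u x := fun x hx => (not_le.mp (mt (hWS x hx.1).mpr hx.2)).le
  have hinf : IsWeakUpperGradientOn μ (S.piecewise g h) (u ⊓ v) W :=
    hg.piecewise hh hgfin hhfin hW hS (hu.inf hv) (fun x hx => inf_of_le_left (hle x hx))
      fun x hx => inf_of_le_right (hge x hx)
  have hsup : IsWeakUpperGradientOn μ (S.piecewise h g) (u ⊔ v) W :=
    hh.piecewise hg hhfin hgfin hW hS (hu.sup hv) (fun x hx => sup_of_le_right (hle x hx))
      fun x hx => sup_of_le_left (hge x hx)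
  calc _ ≤ ∫⁻ x in W, S.piecewise g h x ∂μ + ∫⁻ x in W, S.piecewise h g x ∂μ :=
        add_le_add (iInf₂_le (S.piecewise g h) hinf) (iInf₂_le (S.piecewise h g) hsup)
    _ = ∫⁻ x in W, (g x + h x) ∂μ := by
        rw [← lintegral_add_left hinf.1]
        refine lintegral_congr fun x => ?_
        by_cases hx : x ∈ S <;> simp [hx, add_comm]
    _ = _ := lintegral_add_left hg.1 _

end WeakUpperGradient

/-! ### Total variation -/

section Limits

theorem liminf_add_liminf_le_liminf_add {ι : Type*} (u v : ι → ℝ≥0∞) (l : Filter ι) :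
    liminf u l + liminf v l ≤ liminf (u + v) l := by
  rcases eq_or_ne (liminf u l) 0 with hu | hu
  · rw [hu, zero_add]
    exact liminf_le_liminf (.of_forall fun _ => le_add_self)
  rcases eq_or_ne (liminf v l) 0 with hv | hv
  · rw [hv, add_zero]
    exact liminf_le_liminf (.of_forall fun _ => le_self_add)
  refine le_of_forall_lt fun c hc => ?_
  obtain ⟨a, ha, b, hb, hab⟩ := ENNReal.exists_lt_add_of_lt_add hc hu hv
  refine hab.trans_le (le_liminf_of_le (h := ?_))
  filter_upwards [eventually_lt_of_lt_liminf ha, eventually_lt_of_lt_liminf hb] with i hi hi'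
  exact add_le_add hi.le hi'.le

theorem tendsto_lintegral_zero_of_le_add {Ω ι : Type*} [MeasurableSpace Ω] {μ : Measure Ω}
    {l : Filter ι} {f g h : ι → Ω → ℝ≥0∞} (hf : Tendsto (fun i => ∫⁻ x, f i x ∂μ) l (𝓝 0))
    (hg : Tendsto (fun i => ∫⁻ x, g i x ∂μ) l (𝓝 0)) (hfm : ∀ i, AEMeasurable (f i) μ)
    (hle : ∀ i x, h i x ≤ f i x + g i x) : Tendsto (fun i => ∫⁻ x, h i x ∂μ) l (𝓝 0) := by
  have hsum := hf.add hg
  rw [add_zero] at hsum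
  refine tendsto_of_tendsto_of_tendsto_of_le_of_le tendsto_const_nhds hsum (fun _ => zero_le)
    fun i => ?_
  exact (lintegral_mono (hle i)).trans_eq (lintegral_add_left' (hfm i) _)

theorem ofReal_abs_le_ofReal_abs_add_ofReal_abs {a b c : ℝ} (h : |a| ≤ |b| + |c|) :
    ENNReal.ofReal |a| ≤ ENNReal.ofReal |b| + ENNReal.ofReal |c| :=
  (ENNReal.ofReal_le_ofReal h).trans ENNReal.ofReal_add_le

theorem exists_isOpen_isCompact_closure_eventually_subset {Y : Type*} [TopologicalSpace Y]
    [T2Space Y] [LocallyCompactSpace Y] [SecondCountableTopology Y] {W : Set Y} (hW : IsOpen W) :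
    ∃ U : ℕ → Set Y, (∀ n, IsOpen (U n) ∧ IsCompact (closure (U n)) ∧ closure (U n) ⊆ W) ∧
      ∀ K ⊆ W, IsCompact K → ∀ᶠ n in atTop, K ⊆ U n := by
  have := hW.locallyCompactSpace
  let C := CompactExhaustion.choice W
  have hC : ∀ n, IsCompact (Subtype.val '' C n) := fun n =>
    (C.isCompact n).image continuous_subtype_val
  have hclosure : ∀ n, closure (Subtype.val '' interior (C n)) ⊆ Subtype.val '' C n := fun n =>
    closure_minimal (image_mono interior_subset) (hC n).isClosed
  refine ⟨fun n => Subtype.val '' interior (C n), fun n =>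
    ⟨hW.isOpenMap_subtype_val _ isOpen_interior, (hC n).of_isClosed_subset isClosed_closure
      (hclosure n), (hclosure n).trans (Subtype.coe_image_subset W _)⟩, fun K hKW hK => ?_⟩
  obtain ⟨N, hN⟩ := C.exists_superset_of_isCompact
    (Topology.IsInducing.subtypeVal.isCompact_preimage_iff (by rwa [Subtype.range_coe]) |>.mpr hK)
  filter_upwards [eventually_gt_atTop N] with n hn x hx
  exact ⟨⟨x, hKW hx⟩, C.subset_interior hn (hN hx), rfl⟩

end Limits

section TotalVariation

omit [BorelSpace X]

variable {μ : Measure X} {u v w : X → ℝ} {V W : Set X}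

theorem variationOn_mono (μ : Measure X) (v : X → ℝ) (hVW : V ⊆ W) :
    variationOn μ v V ≤ variationOn μ v W :=
  le_iInf₂ fun u hu => (iInf₂_le u ⟨fun n => (hu.1 n).mono hVW, fun W' hW' hc hsub =>
    hu.2 W' hW' hc (hsub.trans hVW)⟩).trans
      (liminf_le_liminf (.of_forall fun n => gradEnergy_mono μ (u n) hVW))

theorem variationOn_congr_ae (h : v =ᵐ[μ.restrict W] w) :
    variationOn μ v W = variationOn μ w W := by
  have hiff : ∀ u, TendstoL1loc μ W u v ↔ TendstoL1loc μ W u w := by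
    refine fun u => forall₄_congr fun W' _ _ hsub => ?_
    have hW' := ae_restrict_of_ae_restrict_of_subset (subset_closure.trans hsub) h
    have hint : ∀ n, ∫⁻ x in W', ENNReal.ofReal |u n x - v x| ∂μ =
        ∫⁻ x in W', ENNReal.ofReal |u n x - w x| ∂μ := fun n =>
      lintegral_congr_ae (hW'.mono fun x hx => by simp only [hx])
    simp only [hint]
  simp only [variationOn, hiff]

theorem totalVar_of_isOpen (μ : Measure X) (v : X → ℝ) (hW : IsOpen W) :
    totalVar μ v W = variationOn μ v W :=
  le_antisymm (iInf₂_le W ⟨hW, subset_rfl⟩) (le_iInf₂ fun _ hV => variationOn_mono μ v hV.2)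

theorem exists_locLipschitzOn_tendstoL1loc_of_variationOn_lt {c : ℝ≥0∞}
    (h : variationOn μ v W < c) : ∃ u : ℕ → X → ℝ, (∀ n, LocLipschitzOn (u n) W) ∧
      TendstoL1loc μ W u v ∧ ∀ n, gradEnergy μ (u n) W < c := by
  simp only [variationOn, iInf_lt_iff] at h
  obtain ⟨u, ⟨hu, hlim⟩, huc⟩ := h
  obtain ⟨φ, hφ, hφc⟩ := extraction_of_frequently_atTop
    (frequently_lt_of_liminf_lt (by isBoundedDefault) huc)
  exact ⟨u ∘ φ, fun n => hu (φ n), fun W' hW' hc hsub =>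
    (hlim W' hW' hc hsub).comp hφ.tendsto_atTop, hφc⟩

theorem LocLipschitzOn.aemeasurable [BorelSpace X] (hu : LocLipschitzOn u W)
    (hW : MeasurableSet W) : AEMeasurable u (μ.restrict W) :=
  hu.continuousOn.aemeasurable hW

theorem TendstoL1loc.of_abs_sub_le_add {u v w : ℕ → X → ℝ} {u' v' w' : X → ℝ}
    (hu : TendstoL1loc μ W u u') (hv : TendstoL1loc μ W v v')
    (hm : ∀ n, AEMeasurable (u n - u') (μ.restrict W))
    (hle : ∀ n x, |w n x - w' x| ≤ |u n x - u' x| + |v n x - v' x|) : TendstoL1loc μ W w w' :=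
  fun W' hW' hc hsub => tendsto_lintegral_zero_of_le_add (hu W' hW' hc hsub) (hv W' hW' hc hsub)
    (fun n => ((hm n).mono_set (subset_closure.trans hsub)).abs.ennreal_ofReal)
    fun n x => ofReal_abs_le_ofReal_abs_add_ofReal_abs (hle n x)

theorem variationOn_inf_add_variationOn_sup_le [BorelSpace X] (v : X → ℝ) (hW : MeasurableSet W)
    (hu : AEMeasurable u (μ.restrict W)) :
    variationOn μ (u ⊓ v) W + variationOn μ (u ⊔ v) W ≤ variationOn μ u W + variationOn μ v W := by
  by_contra! hlt
  obtain ⟨a, ha, b, hb, hab⟩ := ENNReal.exists_add_lt_of_add_lt hlt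
  obtain ⟨f, hf, hfu, hfa⟩ := exists_locLipschitzOn_tendstoL1loc_of_variationOn_lt ha
  obtain ⟨g, hg, hgv, hgb⟩ := exists_locLipschitzOn_tendstoL1loc_of_variationOn_lt hb
  have hm : ∀ n, AEMeasurable (f n - u) (μ.restrict W) := fun n => ((hf n).aemeasurable hW).sub hu
  have hinf : TendstoL1loc μ W (fun n => f n ⊓ g n) (u ⊓ v) :=
    hfu.of_abs_sub_le_add hgv hm fun n x => (abs_min_sub_min_le_max _ _ _ _).trans
      (max_le_add_of_nonneg (abs_nonneg _) (abs_nonneg _))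
  have hsup : TendstoL1loc μ W (fun n => f n ⊔ g n) (u ⊔ v) :=
    hfu.of_abs_sub_le_add hgv hm fun n x => (abs_max_sub_max_le_max _ _ _ _).trans
      (max_le_add_of_nonneg (abs_nonneg _) (abs_nonneg _))
  refine hab.not_ge ?_
  calc variationOn μ (u ⊓ v) W + variationOn μ (u ⊔ v) W
      ≤ liminf (fun n => gradEnergy μ (f n ⊓ g n) W) atTop +
          liminf (fun n => gradEnergy μ (f n ⊔ g n) W) atTop :=
        add_le_add (iInf₂_le (fun n => f n ⊓ g n) ⟨fun n => (hf n).inf (hg n), hinf⟩)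
          (iInf₂_le (fun n => f n ⊔ g n) ⟨fun n => (hf n).sup (hg n), hsup⟩)
    _ ≤ _ := liminf_add_liminf_le_liminf_add _ _ _
    _ ≤ a + b := liminf_le_of_frequently_le' (.of_forall fun n =>
        (gradEnergy_inf_add_gradEnergy_sup_le μ hW (hf n) (hg n)).trans
          (add_le_add (hfa n).le (hgb n).le))

theorem totalVar_inf_add_totalVar_sup_le [BorelSpace X] (hu : AEMeasurable u μ) (v : X → ℝ)
    (A : Set X) :
    totalVar μ (u ⊓ v) A + totalVar μ (u ⊔ v) A ≤ totalVar μ u A + totalVar μ v A := by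
  refine ENNReal.le_iInf₂_add_iInf₂ fun V hV W hW => ?_
  have hVW : IsOpen (V ∩ W) ∧ A ⊆ V ∩ W := ⟨hV.1.inter hW.1, subset_inter hV.2 hW.2⟩
  calc totalVar μ (u ⊓ v) A + totalVar μ (u ⊔ v) A
      ≤ variationOn μ (u ⊓ v) (V ∩ W) + variationOn μ (u ⊔ v) (V ∩ W) :=
        add_le_add (iInf₂_le (V ∩ W) hVW) (iInf₂_le (V ∩ W) hVW)
    _ ≤ variationOn μ u (V ∩ W) + variationOn μ v (V ∩ W) :=
        variationOn_inf_add_variationOn_sup_le v hVW.1.measurableSet hu.restrict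
    _ ≤ variationOn μ u V + variationOn μ v W :=
        add_le_add (variationOn_mono μ u inter_subset_left)
          (variationOn_mono μ v inter_subset_right)

theorem variationOn_le_liminf_variationOn [BorelSpace X] [LocallyCompactSpace X]
    [SecondCountableTopology X] {v : ℕ → X → ℝ} (hW : IsOpen W)
    (hvm : ∀ n, AEMeasurable (v n) (μ.restrict W)) (hvw : TendstoL1loc μ W v w) :
    variationOn μ w W ≤ liminf (fun n => variationOn μ (v n) W) atTop := by
  refine le_of_forall_gt_imp_ge_of_dense fun c hc => ?_
  obtain ⟨φ, hφ, hφc⟩ := extraction_of_frequently_atTop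
    (frequently_lt_of_liminf_lt (by isBoundedDefault) hc)
  obtain ⟨U, hU, hUK⟩ := exists_isOpen_isCompact_closure_eventually_subset hW
  have happrox : ∀ n, ∃ u : X → ℝ, LocLipschitzOn u W ∧ gradEnergy μ u W < c ∧
      ∫⁻ x in U n, ENNReal.ofReal |u x - v (φ n) x| ∂μ < (n : ℝ≥0∞)⁻¹ := fun n => by
    obtain ⟨u, hu, huv, huc⟩ := exists_locLipschitzOn_tendstoL1loc_of_variationOn_lt (hφc n)
    have hpos : (0 : ℝ≥0∞) < (n : ℝ≥0∞)⁻¹ := ENNReal.inv_pos.mpr (ENNReal.natCast_ne_top n)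
    obtain ⟨k, hk⟩ :=
      ((huv (U n) (hU n).1 (hU n).2.1 (hU n).2.2).eventually_lt_const hpos).exists
    exact ⟨u k, hu k, huc k, hk⟩
  choose u hu huc huv using happrox
  have hlim : TendstoL1loc μ W u w := fun W' hW' hc hsub => by
    have huv' : Tendsto (fun n => ∫⁻ x in W', ENNReal.ofReal |u n x - v (φ n) x| ∂μ) atTop
        (𝓝 0) := by
      refine tendsto_of_tendsto_of_tendsto_of_le_of_le' tendsto_const_nhds
        ENNReal.tendsto_inv_nat_nhds_zero (.of_forall fun _ => zero_le) ?_
      filter_upwards [hUK _ hsub hc] with n hn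
      exact (lintegral_mono_set (subset_closure.trans hn)).trans (huv n).le
    refine tendsto_lintegral_zero_of_le_add huv'
      ((hvw W' hW' hc hsub).comp hφ.tendsto_atTop) (fun n => ?_)
      fun n x => ofReal_abs_le_ofReal_abs_add_ofReal_abs (abs_sub_le _ _ _)
    exact ((((hu n).aemeasurable hW.measurableSet).sub (hvm (φ n))).mono_set
      (subset_closure.trans hsub)).abs.ennreal_ofReal
  exact (iInf₂_le u ⟨hu, hlim⟩).trans
    (liminf_le_of_frequently_le' (.of_forall fun n => (huc n).le))

end TotalVariation

/-! ### Perimeter -/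

section Perimeter

variable {μ : Measure X} {E F W : Set X}

omit [BorelSpace X] in
theorem gradEnergy_const (μ : Measure X) (c : ℝ) (W : Set X) :
    gradEnergy μ (fun _ => c) W = 0 := by
  have hmod : mod1 μ (∅ : Set (Curve X)) = 0 :=
    le_zero_iff.mp ((iInf₂_le (fun _ => 0) ⟨measurable_const, by simp⟩).trans (by simp))
  refine le_zero_iff.mp ((iInf₂_le (fun _ => 0) ⟨measurable_const, ?_⟩).trans (by simp))
  simpa [UpperGradIneq] using hmod

omit [BorelSpace X] in
theorem variationOn_const (μ : Measure X) (c : ℝ) (W : Set X) :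
    variationOn μ (fun _ => c) W = 0 := by
  have hconst : (∀ _ : ℕ, LocLipschitzOn (fun _ : X => c) W) ∧
      TendstoL1loc μ W (fun _ _ => c) fun _ => c :=
    ⟨fun _ _ _ => ⟨0, univ, univ_mem, (LipschitzWith.const c).lipschitzOnWith⟩,
      fun _ _ _ _ => by simp⟩
  refine le_zero_iff.mp ((iInf₂_le (fun _ _ => c) hconst).trans_eq ?_)
  simp only [gradEnergy_const, liminf_const]

omit [BorelSpace X] in
theorem perimeter_empty (μ : Measure X) (A : Set X) : perimeter μ ∅ A = 0 := by
  refine le_zero_iff.mp ((iInf₂_le univ ⟨isOpen_univ, subset_univ A⟩).trans_eq ?_)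
  rw [indicator_empty]
  exact variationOn_const μ 0 univ

omit [BorelSpace X] in
theorem perimeter_congr_ae (hW : IsOpen W) (h : E =ᵐ[μ.restrict W] F) :
    perimeter μ E W = perimeter μ F W := by
  simp only [perimeter, totalVar_of_isOpen μ _ hW]
  exact variationOn_congr_ae (indicator_ae_eq_of_ae_eq_set h)

theorem perimeter_inter_add_perimeter_union_le (hE : MeasurableSet E) (F A : Set X) :
    perimeter μ (E ∩ F) A + perimeter μ (E ∪ F) A ≤ perimeter μ E A + perimeter μ F A := by
  have hinf : (E ∩ F).indicator (fun _ => (1 : ℝ)) = E.indicator (fun _ => 1) ⊓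
      F.indicator (fun _ => 1) := by
    ext x
    by_cases hxE : x ∈ E <;> by_cases hxF : x ∈ F <;> simp [hxE, hxF]
  have hsup : (E ∪ F).indicator (fun _ => (1 : ℝ)) = E.indicator (fun _ => 1) ⊔
      F.indicator (fun _ => 1) := by
    ext x
    by_cases hxE : x ∈ E <;> by_cases hxF : x ∈ F <;> simp [hxE, hxF]
  rw [perimeter, perimeter, hinf, hsup]
  exact totalVar_inf_add_totalVar_sup_le (measurable_const.indicator hE).aemeasurable _ A

theorem perimeter_union_le (hE : MeasurableSet E) (F A : Set X) :
    perimeter μ (E ∪ F) A ≤ perimeter μ E A + perimeter μ F A :=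
  le_add_self.trans (perimeter_inter_add_perimeter_union_le hE F A)

omit [BorelSpace X] in
theorem tendstoL1loc_indicator_iUnion [IsFiniteMeasureOnCompacts μ] {S : ℕ → Set X}
    (hS : Monotone S) (hSm : ∀ n, MeasurableSet (S n)) :
    TendstoL1loc μ W (fun n => (S n).indicator fun _ => 1) ((⋃ n, S n).indicator fun _ => 1) := by
  intro W' _ hc _
  have hfin : ∫⁻ _ in W', 1 ∂μ ≠ ⊤ := by
    rw [setLIntegral_one]
    exact measure_ne_top_of_subset subset_closure hc.measure_ne_top
  rw [← lintegral_zero (μ := μ.restrict W')]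
  refine tendsto_lintegral_of_dominated_convergence (fun _ => 1) (fun n => ?_) (fun n => ?_) hfin ?_
  · exact ((measurable_const.indicator (hSm n)).sub
      (measurable_const.indicator (.iUnion hSm))).abs.ennreal_ofReal
  · refine .of_forall fun x => ?_
    by_cases hx : x ∈ S n <;> by_cases hx' : x ∈ ⋃ n, S n <;> simp [hx, hx']
  · refine .of_forall fun x => tendsto_nhds_of_eventually_eq ?_
    filter_upwards [tendsto_pure.mp (hS.tendsto_indicator S (fun _ => (1 : ℝ)) x)] with n hn
    simp [hn]

theorem perimeter_iUnion_le_liminf [LocallyCompactSpace X] [SecondCountableTopology X]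
    [IsFiniteMeasureOnCompacts μ] {S : ℕ → Set X} (hS : Monotone S)
    (hSm : ∀ n, MeasurableSet (S n)) (hW : IsOpen W) :
    perimeter μ (⋃ n, S n) W ≤ liminf (fun n => perimeter μ (S n) W) atTop := by
  simp only [perimeter, totalVar_of_isOpen μ _ hW]
  exact variationOn_le_liminf_variationOn hW
    (fun n => (measurable_const.indicator (hSm n)).aemeasurable)
    (tendstoL1loc_indicator_iUnion hS hSm)

theorem perimeter_iUnion_le [LocallyCompactSpace X] [SecondCountableTopology X]
    [IsFiniteMeasureOnCompacts μ] {ι : Type*} [Countable ι] {S : ι → Set X}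
    (hSm : ∀ i, MeasurableSet (S i)) (hW : IsOpen W) :
    perimeter μ (⋃ i, S i) W ≤ ∑' i, perimeter μ (S i) W := by
  have := Encodable.ofCountable ι
  let T : ℕ → Set X := fun n => ⋃ i ∈ Encodable.decode₂ ι n, S i
  have hTm : ∀ n, MeasurableSet (T n) := fun n =>
    Encodable.iUnion_decode₂_cases (C := MeasurableSet) (f := S) .empty hSm
  have hTacc : ∀ n, MeasurableSet (accumulate T n) := fun n =>
    .biUnion (to_countable _) fun m _ => hTm m
  have hsum : ∀ n, perimeter μ (accumulate T n) W ≤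
      ∑ m ∈ Finset.range (n + 1), perimeter μ (T m) W := fun n => by
    induction n with
    | zero => simp
    | succ n ih =>
      rw [accumulate_succ, Finset.sum_range_succ]
      exact (perimeter_union_le (hTacc n) _ W).trans (add_le_add_left ih _)
  rw [← Encodable.iUnion_decode₂, ← iUnion_accumulate,
    ← tsum_iUnion_decode₂ (fun A => perimeter μ A W) (perimeter_empty μ W)]
  exact (perimeter_iUnion_le_liminf monotone_accumulate hTacc hW).trans
    (liminf_le_of_frequently_le' (.of_forall fun n =>
      (hsum n).trans (ENNReal.sum_le_tsum _)))

end Perimeter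

/-! ### Essential connected components -/

/-- `A` cuts `E` into two pieces, `E ∩ A` and `E \ A`, without creating any perimeter in `W`. Only
one inequality is required, the other one being the subadditivity of the perimeter. -/
def SplitsPerimeter (μ : Measure X) (A E W : Set X) : Prop :=
  perimeter μ (E ∩ A) W + perimeter μ (E \ A) W ≤ perimeter μ E W

section Splitting

variable {μ : Measure X} {A E F H W : Set X} {I J : Set ℕ} {G : ℕ → Set X}

theorem SplitsPerimeter.of_ae_le (hA : SplitsPerimeter μ A E W) (hAm : MeasurableSet A)
    (hE : MeasurableSet E) (hH : MeasurableSet H) (hW : IsOpen W)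
    (hHE : H ≤ᵐ[μ.restrict W] E) (hEfin : perimeter μ E W ≠ ⊤) : SplitsPerimeter μ A H W := by
  by_cases hHfin : perimeter μ H W = ⊤
  · rw [SplitsPerimeter, hHfin]
    exact le_top
  have hinter : (H ∩ E : Set X) =ᵐ[μ.restrict W] H :=
    inter_subset_left.eventuallyLE.antisymm (hHE.mono fun _ hx hxH => ⟨hxH, hx hxH⟩)
  have hunion : (H ∪ E : Set X) =ᵐ[μ.restrict W] E :=
    EventuallyLE.antisymm (hHE.mono fun _ hx h => h.elim hx id) subset_union_right.eventuallyLE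
  have hcap : perimeter μ (H ∩ E ∩ A) W = perimeter μ (H ∩ A) W :=
    perimeter_congr_ae hW (hinter.inter .rfl)
  have hdiff : perimeter μ ((H ∩ E) \ A) W = perimeter μ (H \ A) W :=
    perimeter_congr_ae hW (hinter.diff .rfl)
  have hin := perimeter_inter_add_perimeter_union_le (μ := μ) hH (E ∩ A) W
  have hout := perimeter_inter_add_perimeter_union_le (μ := μ) hH (E \ A) W
  have hcross := perimeter_inter_add_perimeter_union_le (μ := μ) (hH.union (hE.inter hAm))
    (H ∪ E \ A) W
  rw [← inter_assoc, hcap] at hin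
  rw [← inter_sdiff_assoc, hdiff] at hout
  rw [← union_inter_distrib_left, disjoint_sdiff_inter.symm.inter_eq, union_empty,
    ← union_union_distrib_left, inter_union_sdiff, perimeter_congr_ae hW hunion] at hcross
  refine (ENNReal.add_le_add_iff_right (ENNReal.add_ne_top.mpr ⟨hHfin, hEfin⟩)).mp ?_
  calc perimeter μ (H ∩ A) W + perimeter μ (H \ A) W + (perimeter μ H W + perimeter μ E W)
      ≤ perimeter μ (H ∩ A) W + perimeter μ (H \ A) W +
          (perimeter μ (H ∪ E ∩ A) W + perimeter μ (H ∪ E \ A) W) := by gcongr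
    _ = (perimeter μ (H ∩ A) W + perimeter μ (H ∪ E ∩ A) W) +
          (perimeter μ (H \ A) W + perimeter μ (H ∪ E \ A) W) := by ring
    _ ≤ (perimeter μ H W + perimeter μ (E ∩ A) W) +
          (perimeter μ H W + perimeter μ (E \ A) W) := add_le_add hin hout
    _ = perimeter μ H W +
          (perimeter μ H W + (perimeter μ (E ∩ A) W + perimeter μ (E \ A) W)) := by ring
    _ ≤ perimeter μ H W + (perimeter μ H W + perimeter μ E W) := by gcongr; exact hA

theorem IsIndecomposableIn.measure_inter_eq_zero_or (hind : IsIndecomposableIn μ H W)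
    (hA : SplitsPerimeter μ A H W) (hAm : MeasurableSet A) (hH : MeasurableSet H)
    (hW : IsOpen W) (hHfin : perimeter μ H W < ⊤) :
    μ ((H ∩ W) ∩ A) = 0 ∨ μ ((H ∩ W) \ A) = 0 := by
  have hHW : (H ∩ W : Set X) =ᵐ[μ.restrict W] H :=
    inter_subset_left.eventuallyLE.antisymm
      ((ae_restrict_mem hW.measurableSet).mono fun x hxW hxH => ⟨hxH, hxW⟩)
  have hin : perimeter μ ((H ∩ W) ∩ A) W = perimeter μ (H ∩ A) W :=
    perimeter_congr_ae hW (hHW.inter .rfl)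
  have hout : perimeter μ ((H ∩ W) \ A) W = perimeter μ (H \ A) W :=
    perimeter_congr_ae hW (hHW.diff .rfl)
  by_contra! hcon
  refine hind ⟨(H ∩ W) ∩ A, (H ∩ W) \ A, (hH.inter hW.measurableSet).inter hAm,
    (hH.inter hW.measurableSet).diff hAm, disjoint_sdiff_inter.symm, inter_union_sdiff _ _,
    ?_, ?_, pos_iff_ne_zero.mpr hcon.1, pos_iff_ne_zero.mpr hcon.2, ?_⟩
  · exact hin ▸ (le_self_add.trans hA).trans_lt hHfin
  · exact hout ▸ (le_add_self.trans hA).trans_lt hHfin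
  · rw [hin, hout]
    refine le_antisymm ?_ hA
    simpa only [inter_union_sdiff] using perimeter_union_le (μ := μ) (hH.inter hAm) (H \ A) W

omit [BorelSpace X] in
theorem IsEssentialPartition.measurableSet (hE : IsEssentialPartition μ E I G) :
    MeasurableSet E :=
  hE.2.2.1 ▸ .biUnion (to_countable I) hE.1

theorem IsEssentialPartition.splitsPerimeter [LocallyCompactSpace X] [SecondCountableTopology X]
    [IsFiniteMeasureOnCompacts μ] (hE : IsEssentialPartition μ E I G) {i : ℕ} (hi : i ∈ I) :
    SplitsPerimeter μ (G i) E univ := by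
  obtain ⟨hmeas, hdisj, hunion, -, -, -, hper⟩ := hE
  let i' : I := ⟨i, hi⟩
  have hinter : E ∩ G i = G i := inter_eq_right.mpr (hunion ▸ subset_biUnion_of_mem hi)
  have hsdiff : E \ G i = ⋃ j : ({i'}ᶜ : Set I), G j := by
    refine Subset.antisymm (fun x ⟨hxE, hxi⟩ => ?_) (iUnion_subset fun j x hxj => ?_)
    · obtain ⟨j, hj, hxj⟩ := mem_iUnion₂.mp (hunion ▸ hxE)
      have hji : j ≠ i := fun h => hxi (h ▸ hxj)
      exact mem_iUnion.mpr ⟨⟨⟨j, hj⟩, fun h => hji (Subtype.ext_iff.mp h)⟩, hxj⟩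
    · have hji : (j : ℕ) ≠ i := fun h => j.2 (Subtype.ext h)
      exact ⟨hunion ▸ mem_biUnion j.1.2 hxj, disjoint_left.mp (hdisj j j.1.2 i hi hji) hxj⟩
  rw [SplitsPerimeter, hinter, hsdiff, hper,
    ← ENNReal.summable.tsum_add_tsum_compl (s := {i'}) ENNReal.summable,
    tsum_singleton i' fun j : I => perimeter μ (G j) univ]
  gcongr
  exact perimeter_iUnion_le (fun j => hmeas j j.1.2) isOpen_univ

theorem IsEssentialPartition.measure_inter_eq_zero_or [LocallyCompactSpace X]
    [SecondCountableTopology X] [IsFiniteMeasureOnCompacts μ] (hE : IsEssentialPartition μ E I G)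
    (hEfin : perimeter μ E univ < ⊤) (hH : MeasurableSet H) (hHfin : perimeter μ H univ < ⊤)
    (hind : IsIndecomposableIn μ H univ) (hHE : μ (H \ E) = 0) {i : ℕ} (hi : i ∈ I) :
    μ (H ∩ G i) = 0 ∨ μ (H \ G i) = 0 := by
  have hsplit := (hE.splitsPerimeter hi).of_ae_le (hE.1 i hi) hE.measurableSet hH isOpen_univ
    (ae_restrict_of_ae (ae_le_set.mpr hHE)) hEfin.ne
  simpa only [inter_univ] using
    hind.measure_inter_eq_zero_or hsplit (hE.1 i hi) hH isOpen_univ hHfin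

omit [BorelSpace X] in
theorem IsEssentialPartition.compl_saturationOf (hF : IsEssentialPartition μ (univ \ F) J G) :
    (saturationOf μ F J G)ᶜ = ⋃ j ∈ {j ∈ J | μ (G j) = ⊤}, G j := by
  obtain ⟨-, hdisj, hunion, -⟩ := hF
  refine Subset.antisymm (fun x hx => ?_) (iUnion₂_subset fun j ⟨hj, htop⟩ x hxj => ?_)
  · obtain ⟨hxF, hxG⟩ := not_or.mp hx
    obtain ⟨j, hj, hxj⟩ := mem_iUnion₂.mp (hunion.ge ⟨mem_univ x, hxF⟩)
    have htop : μ (G j) = ⊤ :=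
      not_lt_top_iff.mp fun hlt => hxG (mem_iUnion₂.mpr ⟨j, ⟨hj, hlt⟩, hxj⟩)
    exact mem_biUnion (show j ∈ {j ∈ J | μ (G j) = ⊤} from ⟨hj, htop⟩) hxj
  · rintro (hxF | hxG)
    · exact (hunion.le (mem_biUnion hj hxj)).2 hxF
    · obtain ⟨k, ⟨hk, hlt⟩, hxk⟩ := mem_iUnion₂.mp hxG
      have hjk : j ≠ k := fun h => hlt.ne (h ▸ htop)
      exact disjoint_left.mp (hdisj j hj k hk hjk) hxj hxk

theorem measure_hole_sdiff_saturationOf [LocallyCompactSpace X]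
    [SecondCountableTopology X] [IsFiniteMeasureOnCompacts μ] {H : ℕ → Set X}
    (hE : IsEssentialPartition μ (univ \ E) I G) (hEfin : perimeter μ (univ \ E) univ < ⊤)
    (hF : IsEssentialPartition μ (univ \ F) J H) (h : μ (E \ saturationOf μ F J H) = 0) {i : ℕ}
    (hi : i ∈ I) (hfin : μ (G i) < ⊤) : μ (G i \ saturationOf μ F J H) = 0 := by
  rw [sdiff_eq, hF.compl_saturationOf] at h ⊢
  simp only [inter_iUnion₂] at h ⊢
  rw [measure_biUnion_null_iff (to_countable _)] at h ⊢
  intro j hj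
  rw [inter_comm]
  have hsub : μ (H j \ (univ \ E)) = 0 := by
    rw [← compl_eq_univ_sdiff, sdiff_compl, inter_comm]
    exact h j hj
  refine (hE.measure_inter_eq_zero_or hEfin (hF.1 j hj.1) (hF.2.2.2.2.1 j hj.1)
    (hF.2.2.2.2.2.1 j hj.1) hsub hi).resolve_right fun hnull => hfin.ne ?_
  rw [← top_le_iff, ← hj.2]
  exact measure_mono_ae (ae_le_set.mpr hnull)

theorem saturation_subset_saturation_general [LocallyCompactSpace X] [SecondCountableTopology X]
    [IsFiniteMeasureOnCompacts μ] {H : ℕ → Set X}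
    (hE : IsEssentialPartition μ (univ \ E) I G) (hEfin : perimeter μ (univ \ E) univ < ⊤)
    (hF : IsEssentialPartition μ (univ \ F) J H) (h : μ (E \ saturationOf μ F J H) = 0) :
    μ (saturationOf μ E I G \ saturationOf μ F J H) = 0 := by
  rw [saturationOf, union_sdiff_distrib, measure_union_null_iff]
  simp only [iUnion_sdiff]
  exact ⟨h, (measure_biUnion_null_iff (to_countable {i | i ∈ I ∧ μ (G i) < ⊤})).mpr fun i hi =>
    measure_hole_sdiff_saturationOf hE hEfin hF h hi.1 hi.2⟩

end Splitting

/-- **Proposition (iv).** In a PI space with `μ(X) = ∞`, if `E, F` are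
indecomposable sets and `μ(E ∖ sat(F)) = 0`, then `μ(sat(E) ∖ sat(F)) = 0`. -/
theorem saturation_subset_saturation
    [ProperSpace X] (μ : Measure X)
    (hball : ∀ (x : X) (r : ℝ), 0 < r → 0 < μ (ball x r) ∧ μ (ball x r) < ⊤)
    (hPI : IsPISpace μ) (hinf : μ Set.univ = ⊤)
    (E : Set X) (hE : MeasurableSet E) (hEfin : perimeter μ E Set.univ < ⊤)
    (hEindec : IsIndecomposableIn μ E Set.univ)
    (hEcompfin : perimeter μ (Set.univ \ E) Set.univ < ⊤)
    (I : Set ℕ) (G : ℕ → Set X)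
    (hdecE : IsEssentialPartition μ (Set.univ \ E) I G)
    (F : Set X) (hF : MeasurableSet F) (hFfin : perimeter μ F Set.univ < ⊤)
    (hFindec : IsIndecomposableIn μ F Set.univ)
    (hFcompfin : perimeter μ (Set.univ \ F) Set.univ < ⊤)
    (J : Set ℕ) (H : ℕ → Set X)
    (hdecF : IsEssentialPartition μ (Set.univ \ F) J H)
    (h : μ (E \ saturationOf μ F J H) = 0) :
    μ (saturationOf μ E I G \ saturationOf μ F J H) = 0 := by
  have : IsLocallyFiniteMeasure μ :=
    ⟨fun x => ⟨ball x 1, ball_mem_nhds x one_pos, (hball x 1 one_pos).2⟩⟩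
  exact saturation_subset_saturation_general hdecE hEcompfin hdecF h
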